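/- arXiv:2508.00099 — 6 statements merged into one kernel-verified Lean document; each statement's English description precedes it below -/
import Mathlib

section
/- Let X be a metric space, let Z ⊆ X be a finite nonempty subset with N elements, and let r₀ > 0 and C ≥ 2 be real numbers. Then there exists a real number r with r₀/C^(N²) ≤ r ≤ r₀ and a subset V ⊆ Z such that: (i) for every z ∈ Z there exists v ∈ V with dist(z, v) ≤ r/C; and (ii) any two distinct elements v, v' ∈ V satisfy dist(v, v') > r. -/
/-- The Archipelago lemma: in a metric space, given a finite nonempty set `Z` with `N`
elements, `r₀ > 0` and `C ≥ 2`, there exist a radius `r ∈ [r₀/C^(N²), r₀]` and a subset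
`V ⊆ Z` such that every point of `Z` is within distance `r/C` of some point of `V`, while
distinct points of `V` are at distance greater than `r` from each other. -/
theorem archipelago_lemma {X : Type*} [MetricSpace X] (Z : Finset X) (hZ : Z.Nonempty)
    (N : ℕ) (hN : Z.card = N) (r₀ C : ℝ) (hr₀ : 0 < r₀) (hC : 2 ≤ C) :
    ∃ r : ℝ, r₀ / C ^ (N ^ 2) ≤ r ∧ r ≤ r₀ ∧
      ∃ V : Finset X, V ⊆ Z ∧
        (∀ z ∈ Z, ∃ v ∈ V, dist z v ≤ r / C) ∧
        (∀ v ∈ V, ∀ v' ∈ V, v ≠ v' → r < dist v v') := by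
  classical
  haveI : Nonempty X := ⟨hZ.choose⟩
  have hC0 : (0:ℝ) < C := by linarith
  have key : ∃ k ∈ Finset.range (N ^ 2 + 1), ∀ x ∈ Z, ∀ y ∈ Z,
      dist x y ≤ r₀ / C ^ k → dist x y ≤ r₀ / C ^ k / C := by
    by_contra! h
    choose! f hf g hg h1 h2 using h
    obtain ⟨a, ha, b, hb, hab, he⟩ := Finset.exists_ne_map_eq_of_card_lt_of_maps_to
      (s := Finset.range (N ^ 2 + 1)) (t := Z ×ˢ Z) (f := fun k => (f k, g k))
      (by rw [Finset.card_product, hN, Finset.card_range]; nlinarith)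
      (fun k hk => by
        have hk' := Finset.mem_coe.1 hk
        exact Finset.mem_coe.2 (Finset.mem_product.2 ⟨hf k hk', hg k hk'⟩))
    have mono : ∀ a b : ℕ, a < b → r₀ / C ^ b ≤ r₀ / C ^ a / C := by
      intro a b h
      rw [div_div, ← pow_succ]
      exact div_le_div_of_nonneg_left hr₀.le (by positivity)
        (pow_le_pow_right₀ (by linarith) h)
    simp only [Prod.mk.injEq] at he
    have a1 := h1 a ha
    have a2 := h2 a ha
    have b1 := h1 b hb
    have b2 := h2 b hb
    rw [he.1, he.2] at a1 a2
    rcases lt_or_gt_of_ne hab with h | h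
    · linarith [mono a b h]
    · linarith [mono b a h]
  obtain ⟨k, hk, hgap⟩ := key
  have hk' : k ≤ N ^ 2 := Nat.lt_succ_iff.1 (Finset.mem_range.1 hk)
  have hr : 0 < r₀ / C ^ k := by positivity
  refine ⟨r₀ / C ^ k, ?_, ?_, ?_⟩
  · exact div_le_div_of_nonneg_left hr₀.le (by positivity)
      (pow_le_pow_right₀ (by linarith) hk')
  · exact div_le_self hr₀.le (one_le_pow₀ (by linarith))
  generalize r₀ / C ^ k = r at hgap hr
  obtain ⟨V, hV, hmax⟩ := Finset.exists_max_image
    (Z.powerset.filter (fun V => ∀ v ∈ V, ∀ v' ∈ V, v ≠ v' → r < dist v v'))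
    Finset.card ⟨∅, by simp⟩
  rw [Finset.mem_filter, Finset.mem_powerset] at hV
  refine ⟨V, hV.1, ?_, hV.2⟩
  intro z hz
  by_contra! hcon
  have hfar : ∀ v ∈ V, r < dist z v := by
    intro v hv
    by_contra! h
    exact absurd (hgap z hz v (hV.1 hv) h) (not_le.2 (hcon v hv))
  have hzV : z ∉ V := by
    intro h
    have := hfar z h
    rw [dist_self] at this
    linarith
  have := hmax (insert z V) (by
    rw [Finset.mem_filter, Finset.mem_powerset]
    refine ⟨Finset.insert_subset hz hV.1, ?_⟩
    intro v hv v' hv' hne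
    rcases Finset.mem_insert.1 hv with h | h <;> rcases Finset.mem_insert.1 hv' with h' | h'
    · exact absurd (h.trans h'.symm) hne
    · rw [h]; exact hfar v' h'
    · rw [h', dist_comm]; exact hfar v h
    · exact hV.2 v h v' h' hne)
  rw [Finset.card_insert_of_notMem hzV] at this
  omega
end

section
/- Let g ≥ 1 and regard ℂ^{2g} as a real vector space. Let W be an ℝ-linear subspace of ℂ^{2g} such that A·W ⊆ W for every A in the real symplectic group Sp(2g,ℝ) (real 2g×2g matrices preserving the standard symplectic form, acting on ℂ^{2g} via the inclusion of real matrices into complex matrices, i.e. simultaneously on real and imaginary parts). Then either W = ℂ^{2g}, or there exists c ∈ ℂ with W = c·ℝ^{2g} = {c·v : v ∈ ℝ^{2g}} (the case c = 0 giving W = {0}). -/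
/-- `ℝ^{2g}` modeled as `ℝ^g × ℝ^g`. -/
abbrev RVec (g : ℕ) := (Fin g → ℝ) × (Fin g → ℝ)

/-- The standard symplectic form `ω((a,b),(a',b')) = ∑ (aᵢ·b'ᵢ − bᵢ·a'ᵢ)` on `ℝ^{2g}`. -/
def sympForm (g : ℕ) (v w : RVec g) : ℝ :=
  ∑ i, (v.1 i * w.2 i - v.2 i * w.1 i)

/-- `ℂ^{2g}` modeled as `ℂ^g × ℂ^g`. -/
abbrev CVec (g : ℕ) := (Fin g → ℂ) × (Fin g → ℂ)

/-- Coordinatewise real part of a vector in `ℂ^{2g}`. -/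
def reV {g : ℕ} (p : CVec g) : RVec g :=
  (fun i => (p.1 i).re, fun i => (p.2 i).re)

/-- Coordinatewise imaginary part of a vector in `ℂ^{2g}`. -/
def imV {g : ℕ} (p : CVec g) : RVec g :=
  (fun i => (p.1 i).im, fun i => (p.2 i).im)

/-- The inclusion `ℝ^{2g} → ℂ^{2g}`. -/
def rToC {g : ℕ} (v : RVec g) : CVec g :=
  (fun i => (v.1 i : ℂ), fun i => (v.2 i : ℂ))

/-- The action of a real linear map `A` on `ℂ^{2g}`, acting simultaneously on real and
imaginary parts: `A·p = A(Re p) + i·A(Im p)`. -/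
def actC {g : ℕ} (A : RVec g →ₗ[ℝ] RVec g) (p : CVec g) : CVec g :=
  (fun i => ((A (reV p)).1 i : ℂ) + ((A (imV p)).1 i : ℝ) * Complex.I,
   fun i => ((A (reV p)).2 i : ℂ) + ((A (imV p)).2 i : ℝ) * Complex.I)

theorem sf_add_left (g : ℕ) (a b c : RVec g) :
    sympForm g (a + b) c = sympForm g a c + sympForm g b c := by
  simp only [sympForm, ← Finset.sum_add_distrib]
  refine Finset.sum_congr rfl fun i _ => ?_
  simp; ring

theorem sf_smul_left (g : ℕ) (r : ℝ) (a c : RVec g) :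
    sympForm g (r • a) c = r * sympForm g a c := by
  simp only [sympForm, Finset.mul_sum]
  refine Finset.sum_congr rfl fun i _ => ?_
  simp; ring

theorem sf_swap (g : ℕ) (a c : RVec g) : sympForm g a c = - sympForm g c a := by
  simp only [sympForm, ← Finset.sum_neg_distrib]
  refine Finset.sum_congr rfl fun i _ => ?_
  ring

theorem sf_self (g : ℕ) (a : RVec g) : sympForm g a a = 0 := by
  have := sf_swap g a a
  linarith

theorem sf_add_right (g : ℕ) (a b c : RVec g) :
    sympForm g c (a + b) = sympForm g c a + sympForm g c b := by
  rw [sf_swap, sf_add_left, sf_swap g a, sf_swap g b]; ring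

theorem sf_smul_right (g : ℕ) (r : ℝ) (a c : RVec g) :
    sympForm g c (r • a) = r * sympForm g c a := by
  rw [sf_swap, sf_smul_left, sf_swap g a]; ring

theorem sf_fst (g : ℕ) (a : RVec g) (i : Fin g) :
    sympForm g a (0, Pi.single i 1) = a.1 i := by
  simp [sympForm, Pi.single_apply]

theorem sf_snd (g : ℕ) (a : RVec g) (i : Fin g) :
    sympForm g a (Pi.single i 1, 0) = - a.2 i := by
  simp [sympForm, Pi.single_apply]

theorem sf_nondeg (g : ℕ) (a : RVec g) (h : ∀ w, sympForm g a w = 0) : a = 0 := by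
  refine Prod.ext (funext fun i => ?_) (funext fun i => ?_)
  · simpa [sf_fst] using h (0, Pi.single i 1)
  · simpa [sf_snd] using h (Pi.single i 1, 0)

/-- symplectic transvection -/
def transv (g : ℕ) (u : RVec g) : RVec g →ₗ[ℝ] RVec g where
  toFun v := v + sympForm g v u • u
  map_add' a b := by rw [sf_add_left, add_smul]; abel
  map_smul' r a := by rw [sf_smul_left, mul_smul, RingHom.id_apply, smul_add]

theorem transv_apply (g : ℕ) (u v : RVec g) : transv g u v = v + sympForm g v u • u := rfl

theorem transv_symp (g : ℕ) (u v w : RVec g) :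
    sympForm g (transv g u v) (transv g u w) = sympForm g v w := by
  simp only [transv_apply, sf_add_left, sf_add_right, sf_smul_left, sf_smul_right, sf_self]
  rw [sf_swap g u w]; ring

theorem transv_bij (g : ℕ) (u : RVec g) : Function.Bijective (transv g u) := by
  have hi : Function.Injective (transv g u) := by
    rw [injective_iff_map_eq_zero]
    intro a ha
    apply sf_nondeg
    intro w
    rw [← transv_symp g u, ha]
    simp [sympForm]
  exact ⟨hi, LinearMap.injective_iff_surjective.mp hi⟩

/-- complexified pairing -/
noncomputable def cpair (g : ℕ) (p : CVec g) (u : RVec g) : ℂ :=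
  (sympForm g (reV p) u : ℂ) + (sympForm g (imV p) u : ℂ) * Complex.I

theorem actC_transv (g : ℕ) (u : RVec g) (p : CVec g) :
    actC (transv g u) p = p + cpair g p u • rToC u := by
  refine Prod.ext (funext fun i => ?_) (funext fun i => ?_) <;>
  · apply Complex.ext <;> simp [actC, transv_apply, cpair, rToC, reV, imV]

theorem cpair_smul (g : ℕ) (c : ℂ) (u w : RVec g) :
    cpair g (c • rToC u) w = (sympForm g u w : ℂ) * c := by
  have h1 : reV (c • rToC u) = c.re • u := by
    refine Prod.ext (funext fun i => ?_) (funext fun i => ?_) <;> simp [reV, rToC]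
  have h2 : imV (c • rToC u) = c.im • u := by
    refine Prod.ext (funext fun i => ?_) (funext fun i => ?_) <;> simp [imV, rToC]
  rw [cpair, h1, h2, sf_smul_left, sf_smul_left]
  apply Complex.ext <;> simp <;> ring

theorem rToC_add {g : ℕ} (u w : RVec g) : rToC (u + w) = rToC u + rToC w := by
  refine Prod.ext (funext fun i => ?_) (funext fun i => ?_) <;> simp [rToC]

/-- Classification of the `Sp(2g,ℝ)`-invariant real subspaces of `ℂ^{2g}`: any `ℝ`-linear
subspace `W ⊆ ℂ^{2g}` invariant under every real symplectic automorphism (acting on real and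
imaginary parts simultaneously) is either all of `ℂ^{2g}`, or of the form `c·ℝ^{2g}`
for some `c ∈ ℂ` (with `c = 0` giving `{0}`). -/
theorem invariant_subspaces_of_complexified (g : ℕ) (hg : 1 ≤ g)
    (W : Submodule ℝ (CVec g))
    (hW : ∀ A : RVec g →ₗ[ℝ] RVec g, Function.Bijective A →
      (∀ v w : RVec g, sympForm g (A v) (A w) = sympForm g v w) →
      ∀ p ∈ W, actC A p ∈ W) :
    W = ⊤ ∨ ∃ c : ℂ, (W : Set (CVec g)) = {q | ∃ v : RVec g, q = c • rToC v} := by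
  have key : ∀ p ∈ W, ∀ u, cpair g p u • rToC u ∈ W := by
    intro p hp u
    have h := hW _ (transv_bij g u) (transv_symp g u) p hp
    rw [actC_transv] at h
    exact (W.add_mem_iff_right hp).mp h
  have step : ∀ (c : ℂ) (u w : RVec g), c • rToC u ∈ W → sympForm g u w ≠ 0 →
      c • rToC w ∈ W := by
    intro c u w hu hne
    have h := W.smul_mem (sympForm g u w)⁻¹ (key _ hu w)
    rw [cpair_smul] at h
    convert h using 1
    rw [← Complex.coe_smul, smul_smul, ← mul_assoc, ← Complex.ofReal_mul, inv_mul_cancel₀ hne]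
    simp
  have all : ∀ (c : ℂ) (u : RVec g), u ≠ 0 → c • rToC u ∈ W → ∀ w, c • rToC w ∈ W := by
    intro c u hu hc w
    by_cases hw : sympForm g u w = 0
    · obtain ⟨w0, h0⟩ : ∃ w0, sympForm g u w0 ≠ 0 := by
        by_contra! h
        exact hu (sf_nondeg g u h)
      have h1 := step c u w0 hc h0
      have h2 := step c u (w + w0) hc (by rwa [sf_add_right, hw, zero_add])
      rw [rToC_add, smul_add] at h2
      exact (W.add_mem_iff_left h1).mp h2
    · exact step c u w hc hw
  have pairL : ∀ p ∈ W, ∀ u w, cpair g p u • rToC w ∈ W := by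
    intro p hp u w
    by_cases hu : u = 0
    · subst hu
      have : cpair g p 0 = 0 := by simp [cpair, sympForm]
      rw [this, zero_smul]; exact W.zero_mem
    · exact all _ u hu (key p hp u) w
  by_cases hex : ∃ c : ℂ, (∀ w : RVec g, c • rToC w ∈ W) ∧
      ∀ d : ℂ, (∀ w : RVec g, d • rToC w ∈ W) → ∃ r : ℝ, d = r * c
  · obtain ⟨c, hc, hd⟩ := hex
    right
    refine ⟨c, Set.ext fun q => ⟨fun hq => ?_, ?_⟩⟩
    · have hq' : ∀ u, ∃ r : ℝ, cpair g q u = r * c := fun u => hd _ (pairL q hq u)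
      choose r hr using hq'
      refine ⟨(fun i => r (0, Pi.single i 1), fun i => - r (Pi.single i 1, 0)), ?_⟩
      refine Prod.ext (funext fun i => ?_) (funext fun i => ?_)
      · have h := hr (0, Pi.single i 1)
        rw [cpair, sf_fst, sf_fst] at h
        simp only [reV, imV, Complex.re_add_im] at h
        rw [h]; simp [rToC, mul_comm]
      · have h := hr (Pi.single i 1, 0)
        rw [cpair, sf_snd, sf_snd] at h
        simp only [reV, imV] at h
        have h3 := Complex.re_add_im (q.2 i)
        push_cast at h
        simp only [rToC, Prod.smul_snd, Pi.smul_apply, smul_eq_mul]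
        push_cast
        linear_combination -h - h3
    · rintro ⟨v, rfl⟩
      exact hc v
  · left
    push Not at hex
    obtain ⟨c, hc, hc0⟩ := hex 0 (fun w => by rw [zero_smul]; exact W.zero_mem)
    have hcne : c ≠ 0 := by simpa using hc0 0
    obtain ⟨d, hd, hdr⟩ := hex c hc
    have hD : c.re * d.im - c.im * d.re ≠ 0 := by
      intro hD
      have hn : c.re * c.re + c.im * c.im ≠ 0 := by
        have := Complex.normSq_pos.mpr hcne
        rw [Complex.normSq_apply] at this
        exact this.ne'
      apply hdr ((c.re * d.re + c.im * d.im) / (c.re * c.re + c.im * c.im))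
      apply Complex.ext
      · simp only [Complex.re_ofReal_mul]
        rw [div_mul_eq_mul_div, eq_div_iff hn]
        linear_combination (-c.im) * hD
      · simp only [Complex.im_ofReal_mul]
        rw [div_mul_eq_mul_div, eq_div_iff hn]
        linear_combination (c.re) * hD
    have hz : ∀ (z : ℂ) (w : RVec g), z • rToC w ∈ W := by
      intro z w
      have h := W.add_mem
        (W.smul_mem ((z.re * d.im - z.im * d.re) / (c.re * d.im - c.im * d.re)) (hc w))
        (W.smul_mem ((c.re * z.im - c.im * z.re) / (c.re * d.im - c.im * d.re)) (hd w))
      rw [← Complex.coe_smul, ← Complex.coe_smul, smul_smul, smul_smul, ← add_smul] at h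
      convert h using 2
      apply Complex.ext
      · simp only [Complex.add_re, Complex.re_ofReal_mul]
        rw [div_mul_eq_mul_div, div_mul_eq_mul_div, ← add_div, eq_div_iff hD]
        ring
      · simp only [Complex.add_im, Complex.im_ofReal_mul]
        rw [div_mul_eq_mul_div, div_mul_eq_mul_div, ← add_div, eq_div_iff hD]
        ring
    rw [eq_top_iff]
    intro p _
    have h := W.add_mem (hz 1 (reV p)) (hz Complex.I (imV p))
    convert h using 1
    refine Prod.ext (funext fun i => ?_) (funext fun i => ?_) <;>
    · apply Complex.ext <;> simp [rToC, reV, imV]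
end

section
/- Let g ≥ 1 and let P ∈ ℂ^{2g}, viewed as a homomorphism ℤ^{2g} → ℂ via the standard symplectic pairing or simply as a vector acted on by matrices. The following are equivalent: (i) there exists a finite-index subgroup Γ of the integral symplectic group Sp(2g,ℤ) such that P − L·P ∈ (ℤ + iℤ)^{2g} for every L ∈ Γ; (ii) every coordinate of P lies in ℚ + iℚ. -/
open Matrix

def gaussAdd : AddSubgroup ℂ where
  carrier := {z | ∃ m n : ℤ, z = (m : ℂ) + (n : ℂ) * Complex.I}
  zero_mem' := ⟨0, 0, by simp⟩
  add_mem' := by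
    rintro _ _ ⟨a, b, rfl⟩ ⟨c, d, rfl⟩
    exact ⟨a + c, b + d, by push_cast; ring⟩
  neg_mem' := by
    rintro _ ⟨a, b, rfl⟩
    exact ⟨-a, -b, by push_cast; ring⟩

lemma shear_up_pow (g k : ℕ) :
    (fromBlocks 1 1 0 1 : Matrix (Fin g ⊕ Fin g) (Fin g ⊕ Fin g) ℤ) ^ k =
      fromBlocks 1 (k : Matrix (Fin g) (Fin g) ℤ) 0 1 := by
  induction k with
  | zero => simp
  | succ k ih => rw [pow_succ, ih, fromBlocks_multiply]; simp [add_comm]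

lemma shear_lo_pow (g k : ℕ) :
    (fromBlocks 1 0 1 1 : Matrix (Fin g ⊕ Fin g) (Fin g ⊕ Fin g) ℤ) ^ k =
      fromBlocks 1 0 (k : Matrix (Fin g) (Fin g) ℤ) 1 := by
  induction k with
  | zero => simp
  | succ k ih => rw [pow_succ, ih, fromBlocks_multiply]; simp

lemma shear_up_mem (g : ℕ) :
    (fromBlocks 1 1 0 1 : Matrix (Fin g ⊕ Fin g) (Fin g ⊕ Fin g) ℤ) ∈
      symplecticGroup (Fin g) ℤ := by
  rw [SymplecticGroup.mem_iff, J, fromBlocks_transpose, fromBlocks_multiply, fromBlocks_multiply]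
  simp

lemma shear_lo_mem (g : ℕ) :
    (fromBlocks 1 0 1 1 : Matrix (Fin g ⊕ Fin g) (Fin g ⊕ Fin g) ℤ) ∈
      symplecticGroup (Fin g) ℤ := by
  rw [SymplecticGroup.mem_iff, J, fromBlocks_transpose, fromBlocks_multiply, fromBlocks_multiply]
  simp

lemma rat_of_gauss {z : ℂ} {k : ℕ} (hk : k ≠ 0) {m n : ℤ}
    (h : -((k : ℂ) * z) = (m : ℂ) + (n : ℂ) * Complex.I) :
    ∃ q r : ℚ, z = (q : ℂ) + (r : ℂ) * Complex.I := by
  have hk' : (k : ℂ) ≠ 0 := by exact_mod_cast hk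
  refine ⟨-m / k, -n / k, ?_⟩
  push_cast
  field_simp
  linear_combination -h

lemma gauss_of_rat (q r : ℚ) :
    ∃ N : ℕ, N ≠ 0 ∧ (N : ℂ) * ((q : ℂ) + (r : ℂ) * Complex.I) ∈ gaussAdd := by
  refine ⟨q.den * r.den, by simp, q.num * r.den, r.num * q.den, ?_⟩
  have h1 : (q.den : ℂ) * q = q.num := by exact_mod_cast Rat.den_mul_eq_num q
  have h2 : (r.den : ℂ) * r = r.num := by exact_mod_cast Rat.den_mul_eq_num r
  push_cast
  rw [← h1, ← h2]; ring

/-- Reduction mod `N` on the integral symplectic group. -/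
def redHom (g N : ℕ) : symplecticGroup (Fin g) ℤ →*
    Matrix (Fin g ⊕ Fin g) (Fin g ⊕ Fin g) (ZMod N) :=
  (Int.castRingHom (ZMod N)).mapMatrix.toMonoidHom.comp (symplecticGroup (Fin g) ℤ).subtype



/-- For `P ∈ ℂ^{2g}`, there is a finite-index subgroup `Γ` of the integral symplectic
group `Sp(2g,ℤ)` such that `P − L·P` has Gaussian-integer coordinates for every `L ∈ Γ`
if and only if every coordinate of `P` lies in `ℚ + iℚ`. -/
theorem finite_index_integrality_iff_rational (g : ℕ) (hg : 1 ≤ g)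
    (P : (Fin g ⊕ Fin g) → ℂ) :
    (∃ Γ : Subgroup (Matrix.symplecticGroup (Fin g) ℤ), Γ.FiniteIndex ∧
        ∀ L ∈ Γ, ∀ i : Fin g ⊕ Fin g, ∃ m n : ℤ,
          P i - ((L : Matrix (Fin g ⊕ Fin g) (Fin g ⊕ Fin g) ℤ).map
              (fun k => (k : ℂ))).mulVec P i = (m : ℂ) + (n : ℂ) * Complex.I)
    ↔ (∀ i : Fin g ⊕ Fin g, ∃ q r : ℚ, P i = (q : ℂ) + (r : ℂ) * Complex.I) := by
  constructor
  · rintro ⟨Γ, hΓ, h⟩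
    rintro (i | i)
    · obtain ⟨k, hk, -, hmem⟩ := Subgroup.exists_pow_mem_of_index_ne_zero hΓ.index_ne_zero
        (⟨_, shear_lo_mem g⟩ : symplecticGroup (Fin g) ℤ)
      obtain ⟨m, n, hmn⟩ := h _ hmem (Sum.inr i)
      refine rat_of_gauss hk.ne' (m := m) (n := n) ?_
      rw [← hmn, SubmonoidClass.coe_pow, shear_lo_pow]
      simp [mulVec, dotProduct, Matrix.one_apply, ← Matrix.diagonal_natCast, Matrix.diagonal_apply]
    · obtain ⟨k, hk, -, hmem⟩ := Subgroup.exists_pow_mem_of_index_ne_zero hΓ.index_ne_zero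
        (⟨_, shear_up_mem g⟩ : symplecticGroup (Fin g) ℤ)
      obtain ⟨m, n, hmn⟩ := h _ hmem (Sum.inl i)
      refine rat_of_gauss hk.ne' (m := m) (n := n) ?_
      rw [← hmn, SubmonoidClass.coe_pow, shear_up_pow]
      simp [mulVec, dotProduct, Matrix.one_apply, ← Matrix.diagonal_natCast, Matrix.diagonal_apply]
  · intro h
    have h' : ∀ i, ∃ N : ℕ, N ≠ 0 ∧ (N : ℂ) * P i ∈ gaussAdd := by
      intro i
      obtain ⟨q, r, hqr⟩ := h i
      rw [hqr]
      exact gauss_of_rat q r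
    choose d hd0 hd using h'
    set N := ∏ i, d i with hN
    have hN0 : N ≠ 0 := Finset.prod_ne_zero_iff.2 fun i _ => hd0 i
    have hNP : ∀ i, (N : ℂ) * P i ∈ gaussAdd := by
      intro i
      obtain ⟨c, hc⟩ := Finset.dvd_prod_of_mem d (Finset.mem_univ i)
      have : (N : ℂ) * P i = c • ((d i : ℂ) * P i) := by
        rw [hN, hc]; push_cast; rw [nsmul_eq_mul]; ring
      rw [this]
      exact gaussAdd.nsmul_mem (hd i) c
    haveI : NeZero N := ⟨hN0⟩
    refine ⟨(redHom g N).toHomUnits.ker, inferInstance, ?_⟩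
    intro L hL i
    have hL1 : redHom g N L = 1 := by
      have := congrArg Units.val (MonoidHom.mem_ker.1 hL)
      simpa using this
    have hdiv : ∀ a b, ∃ c : ℤ, (1 : Matrix (Fin g ⊕ Fin g) (Fin g ⊕ Fin g) ℤ) a b - L.1 a b
        = N * c := by
      intro a b
      have h1 := congrFun (congrFun hL1 a) b
      have h2 : ((L.1 a b : ℤ) : ZMod N) =
          (((1 : Matrix (Fin g ⊕ Fin g) (Fin g ⊕ Fin g) ℤ) a b : ℤ) : ZMod N) := by
        refine Eq.trans h1 ?_
        by_cases hab : a = b <;> simp [Matrix.one_apply, hab]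
      exact (ZMod.intCast_eq_intCast_iff_dvd_sub _ _ _).1 h2
    choose c hc using hdiv
    have key : P i - ((L : Matrix (Fin g ⊕ Fin g) (Fin g ⊕ Fin g) ℤ).map
        (fun k => (k : ℂ))).mulVec P i = ∑ j, c i j • ((N : ℂ) * P j) := by
      have hP : P i = ∑ j, (((1 : Matrix (Fin g ⊕ Fin g) (Fin g ⊕ Fin g) ℤ) i j : ℤ) : ℂ) * P j := by
        simp [Matrix.one_apply]
      conv_lhs => rw [hP]
      rw [mulVec, dotProduct, ← Finset.sum_sub_distrib]
      refine Finset.sum_congr rfl fun j _ => ?_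
      have := congrArg (Int.cast : ℤ → ℂ) (hc i j)
      push_cast at this
      rw [zsmul_eq_mul, Matrix.map_apply]
      linear_combination (P j) * this
    have : P i - ((L : Matrix (Fin g ⊕ Fin g) (Fin g ⊕ Fin g) ℤ).map
        (fun k => (k : ℂ))).mulVec P i ∈ gaussAdd := by
      rw [key]
      exact gaussAdd.sum_mem fun j _ => gaussAdd.zsmul_mem (hNP j) _
    exact this
end

section
/- Let n ≥ 1, let z : Fin n → ℂ be injective and let α : Fin n → ℂ. Suppose g : ℂ → ℂ is complex-differentiable at every point of ℂ ∖ range(z), that g tends to 0 along the cocompact filter of ℂ (i.e. g(w) → 0 as |w| → ∞), and that for every j the function w ↦ (w − z j)·g(w) tends to α j as w → z j within ℂ ∖ {z j} (so g has at worst a simple pole at z j with residue α j). Then g(w) = Σ_j α j/(w − z j) for every w ∈ ℂ ∖ range(z). -/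
open Filter

/-- Uniqueness of partial fractions: if `g` is complex-differentiable away from the
distinct points `z j`, tends to `0` at infinity, and has at worst a simple pole with
residue `α j` at each `z j`, then `g(w) = ∑ j, α j / (w − z j)` away from the poles. -/
theorem eq_sum_partial_fractions (n : ℕ) (hn : 1 ≤ n) (z : Fin n → ℂ)
    (hz : Function.Injective z) (α : Fin n → ℂ) (g : ℂ → ℂ)
    (hdiff : ∀ w ∉ Set.range z, DifferentiableAt ℂ g w)
    (hinf : Tendsto g (cocompact ℂ) (nhds 0))
    (hres : ∀ j : Fin n,
      Tendsto (fun w => (w - z j) * g w) (nhdsWithin (z j) {z j}ᶜ) (nhds (α j))) :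
    ∀ w ∉ Set.range z, g w = ∑ j, α j / (w - z j) := by
  classical
  set h : ℂ → ℂ := fun w => g w - ∑ j, α j / (w - z j) with hh
  have hfin : (Set.range z).Finite := Set.finite_range z
  have hd : ∀ w ∉ Set.range z, DifferentiableAt ℂ h w := by
    intro w hw
    refine (hdiff w hw).sub (DifferentiableAt.fun_sum fun j _ => ?_)
    refine (differentiableAt_const _).div (differentiableAt_id.sub_const _) ?_
    exact sub_ne_zero.2 fun e => hw ⟨j, e.symm⟩
  have hzero : ∀ j, Tendsto (fun w => (w - z j) * h w) (nhdsWithin (z j) {z j}ᶜ) (nhds 0) := by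
    intro j
    have hlin : Tendsto (fun w => w - z j) (nhdsWithin (z j) {z j}ᶜ) (nhds 0) := by
      have : ContinuousAt (fun w => w - z j) (z j) := by fun_prop
      simpa using this.tendsto.mono_left nhdsWithin_le_nhds
    have h1 : ∀ i ∈ (Finset.univ : Finset (Fin n)),
        Tendsto (fun w => (w - z j) * (α i / (w - z i))) (nhdsWithin (z j) {z j}ᶜ)
        (nhds (if i = j then α j else 0)) := by
      intro i _
      by_cases hij : i = j
      · subst hij
        rw [if_pos rfl]
        refine tendsto_const_nhds.congr' ?_
        filter_upwards [self_mem_nhdsWithin] with w hw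
        have : w - z i ≠ 0 := sub_ne_zero.2 hw
        field_simp
      · rw [if_neg hij]
        have hne : z j - z i ≠ 0 := sub_ne_zero.2 fun e => hij (hz e).symm
        have : ContinuousAt (fun w => α i / (w - z i)) (z j) := by
          fun_prop (disch := exact hne)
        simpa using hlin.mul (this.tendsto.mono_left nhdsWithin_le_nhds)
    have h2 := (hres j).sub (tendsto_finsetSum _ h1)
    simpa [hh, mul_sub, Finset.mul_sum] using h2
  set F : ℂ → ℂ := fun w =>
    if w ∈ Set.range z then limUnder (nhdsWithin w {w}ᶜ) h else h w with hF
  have hs : ∀ c, (Set.range z \ {c})ᶜ ∈ nhds c := fun c =>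
    (hfin.subset Set.diff_subset).isClosed.isOpen_compl.mem_nhds (by simp)
  have hFd : Differentiable ℂ F := by
    intro c
    by_cases hc : c ∈ Set.range z
    · obtain ⟨j, rfl⟩ := hc
      have key := Complex.differentiableOn_update_limUnder_of_isLittleO (f := h) (hs (z j))
        (fun w hw => (hd w (fun hw' => hw.1 ⟨hw', hw.2⟩)).differentiableWithinAt) (by
          rw [Asymptotics.isLittleO_iff_tendsto']
          · have hlin : Tendsto (fun w => w - z j) (nhdsWithin (z j) {z j}ᶜ) (nhds 0) := by
              have : ContinuousAt (fun w => w - z j) (z j) := by fun_prop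
              simpa using this.tendsto.mono_left nhdsWithin_le_nhds
            have := (hzero j).sub (hlin.mul_const (h (z j)))
            simp only [zero_mul, sub_zero] at this
            refine this.congr fun w => ?_
            rw [div_inv_eq_mul]; ring
          · filter_upwards [self_mem_nhdsWithin] with w hw h0
            exact absurd (inv_eq_zero.1 h0) (sub_ne_zero.2 hw))
      refine (key.differentiableAt (hs _)).congr_of_eventuallyEq ?_
      filter_upwards [hs (z j)] with w hw
      by_cases hwz : w = z j
      · subst hwz; simp [hF]
      · have : w ∉ Set.range z := fun hw' => hw ⟨hw', hwz⟩
        rw [Function.update_of_ne hwz]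
        exact if_neg this
    · refine (hd c hc).congr_of_eventuallyEq ?_
      filter_upwards [hfin.isClosed.isOpen_compl.mem_nhds hc] with w hw
      exact if_neg hw
  have hFinf : Tendsto F (cocompact ℂ) (nhds 0) := by
    have h1 : ∀ i ∈ (Finset.univ : Finset (Fin n)),
        Tendsto (fun w => α i / (w - z i)) (cocompact ℂ) (nhds 0) := by
      intro i _
      have ht : Tendsto (fun w => w - z i) (cocompact ℂ) (cocompact ℂ) :=
        (Homeomorph.subRight (z i)).isClosedEmbedding.tendsto_cocompact
      simpa [div_eq_mul_inv] using ((tendsto_inv₀_cobounded (α := ℂ)).comp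
        (by simpa [Metric.cobounded_eq_cocompact] using ht)).const_mul (α i)
    have h2 := hinf.sub (tendsto_finsetSum _ h1)
    simp only [Finset.sum_const_zero, sub_zero] at h2
    refine h2.congr' ?_
    filter_upwards [hfin.isCompact.compl_mem_cocompact] with w hw
    exact (if_neg hw).symm
  intro w hw
  have := hFd.apply_eq_of_tendsto_cocompact w hFinf
  rw [hF] at this
  simp only [if_neg hw] at this
  exact sub_eq_zero.1 this
end

section
/- Let H be a finitely generated free ℤ-module, let Π ⊆ H be a submodule which is a direct summand of H, and let π ∈ Π. Let S be the set of submodules M ⊆ H such that M + Π = H and M ∩ Π = ℤ·π. Then: (a) for all M, M' ∈ S there is a well-defined ℤ-linear map δ(M,M') : H/Π → Π/ℤπ, sending the class x + Π of any x ∈ M to the class (x' − x) + ℤπ, where x' is any element of M' with x' − x ∈ Π; and (b) for each fixed M ∈ S, the map M' ↦ δ(M,M') is a bijection from S onto Hom(H/Π, Π/ℤπ). -/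
/-- `M` is an `E`-module for the data `(P, e)`: `M + P = H` and `M ∩ P = ℤ·e`. -/
def IsEModule {H : Type*} [AddCommGroup H] (P : Submodule ℤ H) (e : H)
    (M : Submodule ℤ H) : Prop :=
  M ⊔ P = ⊤ ∧ M ⊓ P = Submodule.span ℤ {e}

theorem em_mk_eq {H : Type*} [AddCommGroup H] (P : Submodule ℤ H) (e : H) (a b : H)
    (ha : a ∈ P) (hb : b ∈ P) :
    (Submodule.Quotient.mk (⟨a, ha⟩ : P) : P ⧸ (Submodule.span ℤ {e}).comap P.subtype)
      = Submodule.Quotient.mk (⟨b, hb⟩ : P) ↔ a - b ∈ Submodule.span ℤ {e} := by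
  rw [Submodule.Quotient.eq]
  simp only [Submodule.mem_comap, Submodule.subtype_apply, Submodule.coe_sub]

theorem em_exists {H : Type*} [AddCommGroup H] {P : Submodule ℤ H} {e : H}
    {M : Submodule ℤ H} (hM : IsEModule P e M) (y : H) : ∃ x ∈ M, y - x ∈ P := by
  have : y ∈ M ⊔ P := by rw [hM.1]; trivial
  obtain ⟨x, hx, p, hp, rfl⟩ := Submodule.mem_sup.1 this
  exact ⟨x, hx, by simpa using hp⟩

theorem em_span {H : Type*} [AddCommGroup H] {P : Submodule ℤ H} {e : H}
    {M : Submodule ℤ H} (hM : IsEModule P e M) {x : H} (hx : x ∈ M) (hp : x ∈ P) :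
    x ∈ Submodule.span ℤ {e} := by
  rw [← hM.2]; exact ⟨hx, hp⟩

theorem em_le {H : Type*} [AddCommGroup H] {P : Submodule ℤ H} {e : H}
    {M : Submodule ℤ H} (hM : IsEModule P e M) {x : H}
    (hx : x ∈ Submodule.span ℤ {e}) : x ∈ M := by
  rw [← hM.2] at hx; exact hx.1

theorem em_wd {H : Type*} [AddCommGroup H] {P : Submodule ℤ H} {e : H}
    {M M' : Submodule ℤ H} (hM : IsEModule P e M) (hM' : IsEModule P e M')
    {x y x' y' : H} (hx : x ∈ M) (hy : y ∈ M) (hx' : x' ∈ M') (hy' : y' ∈ M')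
    (h : x' - x ∈ P) (k : y' - y ∈ P) (l : x - y ∈ P) :
    (x' - x) - (y' - y) ∈ Submodule.span ℤ {e} := by
  have h1 := em_span hM (sub_mem hx hy) l
  have h2 : x' - y' ∈ P := by
    have := add_mem (sub_mem h k) l
    convert this using 1
    abel
  have h3 := em_span hM' (sub_mem hx' hy') h2
  convert sub_mem h3 h1 using 1
  abel

/-- The affine (torsor) structure on the set of `E`-modules: (a) for `E`-modules `M, M'`
there is a unique `ℤ`-linear map `δ(M,M') : H/P → P/ℤe` sending the class of `x ∈ M` to
the class of `x' − x`, where `x' ∈ M'` is any element with `x' − x ∈ P`; and (b) for each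
fixed `E`-module `M`, the map `M' ↦ δ(M,M')` is a bijection from the set of `E`-modules
onto `Hom(H/P, P/ℤe)`. -/
theorem e_modules_torsor {H : Type*} [AddCommGroup H]
    [Module.Free ℤ H] [Module.Finite ℤ H]
    (P : Submodule ℤ H) (hP : ∃ Q : Submodule ℤ H, IsCompl P Q) (e : H) (he : e ∈ P) :
    (∀ M : Submodule ℤ H, IsEModule P e M → ∀ M' : Submodule ℤ H, IsEModule P e M' →
      ∃! f : (H ⧸ P) →ₗ[ℤ] (P ⧸ (Submodule.span ℤ {e}).comap P.subtype),
        ∀ x ∈ M, ∀ x' ∈ M', ∀ h : x' - x ∈ P,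
          f (Submodule.Quotient.mk x) = Submodule.Quotient.mk (⟨x' - x, h⟩ : P)) ∧
    (∀ M : Submodule ℤ H, IsEModule P e M →
      ∀ f : (H ⧸ P) →ₗ[ℤ] (P ⧸ (Submodule.span ℤ {e}).comap P.subtype),
        ∃! M' : Submodule ℤ H, IsEModule P e M' ∧
          ∀ x ∈ M, ∀ x' ∈ M', ∀ h : x' - x ∈ P,
            f (Submodule.Quotient.mk x) = Submodule.Quotient.mk (⟨x' - x, h⟩ : P)) := by
  constructor
  · intro M hM M' hM'
    have hs : ∀ q : H ⧸ P, ∃ x ∈ M, ∃ x' ∈ M', x' - x ∈ P ∧ Submodule.Quotient.mk x = q := by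
      intro q
      obtain ⟨y, rfl⟩ := Submodule.Quotient.mk_surjective P q
      obtain ⟨x, hx, h⟩ := em_exists hM y
      obtain ⟨x', hx', h'⟩ := em_exists hM' x
      refine ⟨x, hx, x', hx', ?_, ?_⟩
      · rw [← neg_sub]; exact neg_mem h'
      · rw [Submodule.Quotient.eq, ← neg_sub]; exact neg_mem h
    choose s hsM s' hsM' hss hsq using hs
    let g : (H ⧸ P) →+ (P ⧸ (Submodule.span ℤ {e}).comap P.subtype) :=
      AddMonoidHom.mk' (fun q => Submodule.Quotient.mk (⟨s' q - s q, hss q⟩ : P)) (by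
        intro a b
        rw [← Submodule.Quotient.mk_add]
        have key : (s' (a + b) - s (a + b)) - ((s' a + s' b) - (s a + s b))
            ∈ Submodule.span ℤ {e} := by
          refine em_wd hM hM' (hsM _) (add_mem (hsM a) (hsM b)) (hsM' _)
            (add_mem (hsM' a) (hsM' b)) (hss _) ?_ ?_
          · convert add_mem (hss a) (hss b) using 1
            abel
          · rw [← Submodule.Quotient.eq, Submodule.Quotient.mk_add, hsq, hsq, hsq]
        refine (em_mk_eq P e _ _ (hss _) (add_mem (hss a) (hss b))).2 ?_
        convert key using 1
        abel)
    refine ⟨g.toIntLinearMap, ?_, ?_⟩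
    · intro x hx x' hx' h
      refine (em_mk_eq P e _ _ (hss _) h).2 ?_
      refine em_wd hM hM' (hsM _) hx (hsM' _) hx' (hss _) h ?_
      rw [← Submodule.Quotient.eq, hsq]
    · intro f hf
      ext1
      ext x
      have := hf (s (Submodule.Quotient.mk x)) (hsM _) (s' (Submodule.Quotient.mk x)) (hsM' _)
        (hss _)
      rw [hsq] at this
      exact this
  · intro M hM f
    let N : Submodule ℤ H := AddSubgroup.toIntSubmodule
      { carrier := {x' | ∃ x ∈ M, ∃ h : x' - x ∈ P,
          f (Submodule.Quotient.mk x) = Submodule.Quotient.mk (⟨x' - x, h⟩ : P)}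
        zero_mem' := by
          refine ⟨0, zero_mem _, by simp, ?_⟩
          rw [Submodule.Quotient.mk_zero, map_zero, eq_comm, Submodule.Quotient.mk_eq_zero]
          simp
        add_mem' := by
          rintro a b ⟨x, hx, h, hf⟩ ⟨y, hy, k, kf⟩
          have e1 : a + b - (x + y) = (a - x) + (b - y) := by abel
          refine ⟨x + y, add_mem hx hy, e1 ▸ add_mem h k, ?_⟩
          rw [Submodule.Quotient.mk_add, map_add, hf, kf, ← Submodule.Quotient.mk_add]
          congr 1
          exact Subtype.ext e1.symm
        neg_mem' := by
          rintro a ⟨x, hx, h, hf⟩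
          have e1 : -a - -x = -(a - x) := by abel
          refine ⟨-x, neg_mem hx, e1 ▸ neg_mem h, ?_⟩
          rw [Submodule.Quotient.mk_neg, map_neg, hf, ← Submodule.Quotient.mk_neg]
          congr 1
          exact Subtype.ext e1.symm }
    have hN : ∀ x', x' ∈ N ↔ ∃ x ∈ M, ∃ h : x' - x ∈ P,
          f (Submodule.Quotient.mk x) = Submodule.Quotient.mk (⟨x' - x, h⟩ : P) :=
      fun _ => Iff.rfl
    clear_value N
    have hspan : Submodule.span ℤ {e} ≤ P := by
      rw [Submodule.span_le]; simpa using he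
    refine ⟨N, ⟨⟨?_, ?_⟩, ?_⟩, ?_⟩
    · rw [eq_top_iff]
      intro y _
      obtain ⟨x, hx, h⟩ := em_exists hM y
      obtain ⟨⟨q, hq⟩, hfq⟩ := Submodule.Quotient.mk_surjective _ (f (Submodule.Quotient.mk x))
      refine Submodule.mem_sup.2 ⟨x + q, (hN _).2 ⟨x, hx, by simpa using hq, ?_⟩,
        (y - x) - q, sub_mem h hq, by abel⟩
      rw [← hfq]
      congr 1
      exact Subtype.ext (by simp)
    · apply le_antisymm
      · rintro a ⟨haN, haP⟩
        obtain ⟨x, hx, h, hf⟩ := (hN a).1 haN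
        have hxP : x ∈ P := by simpa using sub_mem haP h
        rw [(Submodule.Quotient.mk_eq_zero P).2 hxP, map_zero, eq_comm,
          Submodule.Quotient.mk_eq_zero] at hf
        have hf' : a - x ∈ Submodule.span ℤ {e} := hf
        simpa using add_mem hf' (em_span hM hx hxP)
      · intro a ha
        refine ⟨(hN a).2 ⟨a, em_le hM ha, by simp, ?_⟩, hspan ha⟩
        rw [(Submodule.Quotient.mk_eq_zero P).2 (hspan ha), map_zero, eq_comm,
          Submodule.Quotient.mk_eq_zero]
        simp
    · intro x hx x' hx' h
      obtain ⟨y, hy, k, hf⟩ := (hN x').1 hx'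
      have hxy : x - y ∈ P := by
        convert sub_mem k h using 1
        abel
      rw [(Submodule.Quotient.eq P).2 hxy, hf]
      refine (em_mk_eq P e _ _ k h).2 ?_
      convert em_span hM (sub_mem hx hy) hxy using 1
      abel
    · rintro K ⟨hK, hKf⟩
      apply le_antisymm
      · intro a ha
        obtain ⟨x, hx, h⟩ := em_exists hM a
        exact (hN a).2 ⟨x, hx, h, hKf x hx a ha h⟩
      · intro a ha
        obtain ⟨x, hx, h, hf⟩ := (hN a).1 ha
        obtain ⟨b, hb, k⟩ := em_exists hK x
        have k' : b - x ∈ P := by rw [← neg_sub]; exact neg_mem k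
        rw [hKf x hx b hb k', em_mk_eq] at hf
        have := sub_mem hb (em_le hK hf)
        convert this using 1
        abel
end

section
/- Define F : ℝ × ℝ → ℝ × ℝ by F(x,y) = (x − y, y) if y < x and F(x,y) = (x, y − x) otherwise. Let x₀ > 0 and y₀ > 0 with x₀/y₀ irrational, and let (xₙ, yₙ) := Fⁿ(x₀, y₀). Then for every n one has xₙ > 0, yₙ > 0 and xₙ/yₙ irrational, and the sequence (xₙ, yₙ) converges to (0, 0) as n → ∞. -/
open Filter

/-- The subtractive Euclidean-algorithm map on `ℝ × ℝ`: subtract the smaller coordinate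
from the larger one. -/
noncomputable def euclidStep : ℝ × ℝ → ℝ × ℝ :=
  fun q => if q.2 < q.1 then (q.1 - q.2, q.2) else (q.1, q.2 - q.1)

lemma euclid_aux (u v : ℕ → ℝ) (a b : ℝ) (hu : ∀ n, 0 < u n) (hv : Antitone v)
    (hs : ∀ n, u n ≤ v n → u (n+1) = u n)
    (ha : Tendsto u atTop (nhds a)) (hb : Tendsto v atTop (nhds b)) (h0 : a = 0)
    (hb0 : 0 ≤ b) : b = 0 := by
  by_contra hne
  have hbp : 0 < b := lt_of_le_of_ne hb0 (Ne.symm hne)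
  subst h0
  obtain ⟨N, hN⟩ := eventually_atTop.1 (ha.eventually (gt_mem_nhds hbp))
  have hc : ∀ n, N ≤ n → u n = u N := by
    intro n hn
    induction n, hn using Nat.le_induction with
    | base => rfl
    | succ n hn ih =>
      rw [hs n ((hN n hn).le.trans (hv.le_of_tendsto hb n)), ih]
  have h1 : Tendsto u atTop (nhds (u N)) :=
    tendsto_const_nhds.congr' (eventually_atTop.2 ⟨N, fun n hn => (hc n hn).symm⟩)
  have := tendsto_nhds_unique ha h1
  have := hu N
  linarith

lemma euclid_inv (q : ℝ × ℝ) (h : 0 < q.1 ∧ 0 < q.2 ∧ Irrational (q.1 / q.2)) :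
    0 < (euclidStep q).1 ∧ 0 < (euclidStep q).2 ∧
      Irrational ((euclidStep q).1 / (euclidStep q).2) := by
  obtain ⟨x, y⟩ := q
  obtain ⟨hx, hy, hi⟩ := h
  simp only at hx hy hi
  unfold euclidStep
  split_ifs with hlt
  · simp only at hlt ⊢
    refine ⟨by linarith, hy, ?_⟩
    have : (x - y) / y = x / y - (1 : ℕ) := by field_simp; simp
    rw [this]
    exact hi.sub_natCast 1
  · simp only at hlt ⊢
    have hne : x ≠ y := by
      rintro rfl
      rw [div_self hx.ne'] at hi
      exact not_irrational_one hi
    have : x < y := lt_of_le_of_ne (not_lt.1 hlt) hne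
    refine ⟨hx, by linarith, ?_⟩
    have h2 : x / (y - x) = ((x / y)⁻¹ - (1 : ℕ))⁻¹ := by
      have : y - x ≠ 0 := by linarith
      rw [inv_div, Nat.cast_one, div_sub_one hx.ne', inv_div]
    rw [h2]
    exact (hi.inv.sub_natCast 1).inv

/-- Subtractive Euclidean dynamics: starting from positive reals `x₀, y₀` with irrational
ratio, all iterates have positive coordinates with irrational ratio, and the iterates
converge to `(0, 0)`. -/
theorem euclid_dynamics (x₀ y₀ : ℝ) (hx : 0 < x₀) (hy : 0 < y₀)
    (hirr : Irrational (x₀ / y₀)) :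
    (∀ n : ℕ, 0 < (euclidStep^[n] (x₀, y₀)).1 ∧ 0 < (euclidStep^[n] (x₀, y₀)).2 ∧
      Irrational ((euclidStep^[n] (x₀, y₀)).1 / (euclidStep^[n] (x₀, y₀)).2)) ∧
    Tendsto (fun n : ℕ => euclidStep^[n] (x₀, y₀)) atTop (nhds (0, 0)) := by
  have H : ∀ n : ℕ, 0 < (euclidStep^[n] (x₀, y₀)).1 ∧ 0 < (euclidStep^[n] (x₀, y₀)).2 ∧
      Irrational ((euclidStep^[n] (x₀, y₀)).1 / (euclidStep^[n] (x₀, y₀)).2) := by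
    intro n
    induction n with
    | zero => exact ⟨hx, hy, hirr⟩
    | succ n ih =>
      rw [Function.iterate_succ_apply']
      exact euclid_inv _ ih
  refine ⟨H, ?_⟩
  obtain ⟨u, hu⟩ : ∃ u : ℕ → ℝ, ∀ n, u n = (euclidStep^[n] (x₀, y₀)).1 := ⟨_, fun _ => rfl⟩
  obtain ⟨v, hv⟩ : ∃ v : ℕ → ℝ, ∀ n, v n = (euclidStep^[n] (x₀, y₀)).2 := ⟨_, fun _ => rfl⟩
  have hup : ∀ n, 0 < u n := fun n => by rw [hu]; exact (H n).1
  have hvp : ∀ n, 0 < v n := fun n => by rw [hv]; exact (H n).2.1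
  have hne : ∀ n, u n ≠ v n := by
    intro n h
    have h3 := (H n).2.2
    rw [← hu, ← hv, h, div_self (hvp n).ne'] at h3
    exact not_irrational_one h3
  have s1 : ∀ n, v n < u n → u (n+1) = u n - v n ∧ v (n+1) = v n := by
    intro n h
    simp only [hu, hv] at h ⊢
    rw [Function.iterate_succ_apply']
    generalize euclidStep^[n] (x₀, y₀) = q at *
    simp [euclidStep, h]
  have s2 : ∀ n, u n ≤ v n → u (n+1) = u n ∧ v (n+1) = v n - u n := by
    intro n h
    simp only [hu, hv] at h ⊢
    rw [Function.iterate_succ_apply']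
    generalize euclidStep^[n] (x₀, y₀) = q at *
    simp [euclidStep, not_lt.2 h]
  have ua : Antitone u := antitone_nat_of_succ_le fun n => by
    have := hvp n
    rcases lt_or_ge (v n) (u n) with h | h
    · linarith [(s1 n h).1]
    · exact (s2 n h).1.le
  have va : Antitone v := antitone_nat_of_succ_le fun n => by
    have := hup n
    rcases lt_or_ge (v n) (u n) with h | h
    · exact (s1 n h).2.le
    · linarith [(s2 n h).2]
  have hua := tendsto_atTop_ciInf ua ⟨0, by rintro _ ⟨n, rfl⟩; exact (hup n).le⟩
  have hvb := tendsto_atTop_ciInf va ⟨0, by rintro _ ⟨n, rfl⟩; exact (hvp n).le⟩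
  generalize (⨅ i, u i) = a at hua
  generalize (⨅ i, v i) = b at hvb
  have ha0 : 0 ≤ a := ge_of_tendsto' hua fun n => (hup n).le
  have hb0 : 0 ≤ b := ge_of_tendsto' hvb fun n => (hvp n).le
  have hm : min a b = 0 := by
    have e : ∀ n, min (u n) (v n) = (u n + v n) - (u (n+1) + v (n+1)) := by
      intro n
      rcases lt_or_ge (v n) (u n) with h | h
      · rw [min_eq_right h.le, (s1 n h).1, (s1 n h).2]; ring
      · rw [min_eq_left h, (s2 n h).1, (s2 n h).2]; ring
    have t1 := hua.min hvb
    have t2 := (hua.add hvb).sub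
      ((hua.comp (tendsto_add_atTop_nat 1)).add (hvb.comp (tendsto_add_atTop_nat 1)))
    rw [sub_self] at t2
    exact tendsto_nhds_unique t1 (t2.congr fun n => (e n).symm)
  have key : a = 0 ∧ b = 0 := by
    rcases min_choice a b with h | h
    · have h0 : a = 0 := h ▸ hm
      exact ⟨h0, euclid_aux u v a b hup va (fun n h => (s2 n h).1) hua hvb h0 hb0⟩
    · have h0 : b = 0 := h ▸ hm
      exact ⟨euclid_aux v u b a hvp ua
        (fun n h => (s1 n (lt_of_le_of_ne h (hne n).symm)).2) hvb hua h0 ha0, h0⟩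
  rw [key.1] at hua
  rw [key.2] at hvb
  refine (hua.prodMk_nhds hvb).congr fun n => ?_
  rw [hu, hv]
end
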